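/- Let 0 < ε < 1/2, let s ≥ 64 with s dividing n, and let f : {0,1}^n → {0,1} be t-resilient for t = n(1 - 1/s), i.e., f takes the value 1 on exactly half the points of every subcube of dimension n - t = n/s. Then every ε-noisy boolean decision tree T on n variables satisfying Pr[ T(x) = f(x) ] ≥ 3/4 (for x uniform on {0,1}^n and over the internal noise of T) has depth strictly greater than (n/2) · log₂(s/64) / log₂(1/ε). -/

import Mathlib

/-- A boolean decision tree on `n` variables with leaves labeled by `L`:
internal nodes are labeled by a variable index and have two children
(child `0` and child `1`). -/
inductive NoisyTree (n : ℕ) (L : Type) : Type where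
  | leaf : L → NoisyTree n L
  | node : Fin n → NoisyTree n L → NoisyTree n L → NoisyTree n L

namespace NoisyTree

/-- Depth of a tree: maximum length of a root-to-leaf path. -/
def depth {n : ℕ} {L : Type} : NoisyTree n L → ℕ
  | .leaf _ => 0
  | .node _ t0 t1 => max (depth t0) (depth t1) + 1

/-- The leaf(-label) distribution of the `ε`-noisy computation of the tree on
input `x`: at a node labeled `i`, move to the child indexed by `x i ⊕ η` where
`η` is a fresh independent Bernoulli(`ε`) bit.  `leafDist ε t x l` is the
probability that the noisy computation reaches a leaf labeled `l`. -/
def leafDist {n : ℕ} {L : Type} [DecidableEq L] (ε : ℝ) :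
    NoisyTree n L → (Fin n → Bool) → L → ℝ
  | .leaf l, _, l' => if l' = l then 1 else 0
  | .node i t0 t1, x, l' =>
      (if x i then ε else 1 - ε) * leafDist ε t0 x l' +
      (if x i then 1 - ε else ε) * leafDist ε t1 x l'

end NoisyTree

/-- A deterministic boolean decision tree on `n` variables with leaves labeled
by `L`: at a node labeled `i` the true value of `x i` is read and the
computation branches on it. -/
inductive DetTree (n : ℕ) (L : Type) : Type where
  | leaf : L → DetTree n L
  | node : Fin n → DetTree n L → DetTree n L → DetTree n L

namespace DetTree

/-- The leaf label reached by the deterministic computation on input `x`. -/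
def eval {n : ℕ} {L : Type} : DetTree n L → (Fin n → Bool) → L
  | .leaf l, _ => l
  | .node i t0 t1, x => if x i then eval t1 x else eval t0 x

/-- The set of distinct variables queried by the deterministic computation on
input `x`. -/
def queried {n : ℕ} {L : Type} : DetTree n L → (Fin n → Bool) → Finset (Fin n)
  | .leaf _, _ => ∅
  | .node i t0 t1, x => insert i (if x i then queried t1 x else queried t0 x)

end DetTree

/-!
Reaching a leaf of the tree multiplies the uniform input distribution by a product likelihood
`∏ i, q i (x i)`, and `ε ^ k i ≤ q i` when the variable `i` has been read `k i` times. Splitting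
each factor as `q i = ε ^ k i + (q i - ε ^ k i)` exhibits the likelihood as a mixture: coordinate
`i` is *erased* with weight `ε ^ k i`, and the leaf learns nothing about it. If at least `r`
coordinates are erased, the corresponding weight is constant along `r`-dimensional subcubes in these
coordinates, so the leaf guesses `f` with probability exactly `1/2`. For a tree of depth `D` the
expected number of erasures is at least `n ε ^ (D / n)` by AM-GM, and a Chernoff bound shows that
fewer than `r` erasures are unlikely unless `D` is large.
-/

open Finset

section Subcube

variable {ι : Type*} [Fintype ι] [DecidableEq ι]

/-- The subcube through `a` whose free coordinates are those in `F`. -/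
def subcube (F : Finset ι) (a : ι → Bool) : Finset (ι → Bool) :=
  {x | ∀ j ∉ F, x j = a j}

/-- `f` takes the value `1` on exactly half the points of every subcube of dimension `r`, i.e. it is
`t`-resilient for `t` the number of variables minus `r`. -/
def BalancedOnSubcubes (f : (ι → Bool) → Bool) (r : ℕ) : Prop :=
  ∀ F : Finset ι, #F = r → ∀ a : ι → Bool, 2 * #{x ∈ subcube F a | f x = true} = 2 ^ r

lemma mem_subcube {F : Finset ι} {a x : ι → Bool} : x ∈ subcube F a ↔ ∀ j ∉ F, x j = a j := by
  simp only [subcube, mem_filter_univ]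

lemma mem_subcube_comm {F : Finset ι} {a x : ι → Bool} :
    x ∈ subcube F a ↔ a ∈ subcube F x := by
  simp only [mem_subcube, eq_comm]

lemma card_subcube (F : Finset ι) (a : ι → Bool) : #(subcube F a) = 2 ^ #F := by
  have subcube_eq_piFinset :
      subcube F a = Fintype.piFinset fun j => if j ∈ F then (univ : Finset Bool) else {a j} := by
    ext x
    rw [mem_subcube, Fintype.mem_piFinset]
    refine forall_congr' fun j => ?_
    by_cases hj : j ∈ F <;> simp [hj]
  simp [subcube_eq_piFinset, Fintype.card_piFinset, apply_ite card]

lemma sum_sum_subcube {R : Type*} [Semiring R] (F : Finset ι) (g : (ι → Bool) → R) :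
    ∑ a, ∑ x ∈ subcube F a, g x = 2 ^ #F * ∑ x, g x := by
  calc ∑ a, ∑ x ∈ subcube F a, g x
      = ∑ x, ∑ _a ∈ subcube F x, g x :=
        sum_comm' fun a x => by simp only [mem_univ, true_and, and_true, mem_subcube_comm]
    _ = 2 ^ #F * ∑ x, g x := by simp [card_subcube, mul_sum]

namespace BalancedOnSubcubes

variable {f : (ι → Bool) → Bool} {r : ℕ}

lemma two_mul_card_filter_subcube (hf : BalancedOnSubcubes f r) {F : Finset ι} (hF : #F = r)
    (a : ι → Bool) (l : Bool) : 2 * #{x ∈ subcube F a | f x = l} = 2 ^ r := by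
  have card_true := hf F hF a
  cases l with
  | true => exact card_true
  | false =>
    have card_add := card_filter_add_card_filter_not (s := subcube F a) (f · = true)
    simp only [Bool.not_eq_true, card_subcube, hF] at card_add
    lia

lemma pos (hf : BalancedOnSubcubes f r) : 0 < r := by
  by_contra! hr
  obtain rfl : r = 0 := by lia
  have := hf ∅ card_empty fun _ => false
  lia

lemma two_mul_sum_filter_eq (hf : BalancedOnSubcubes f r) {U : Finset ι} (hU : r ≤ #U)
    {g : (ι → Bool) → ℝ} (hg : DependsOn g (U : Set ι)ᶜ) (l : Bool) :
    2 * ∑ x with f x = l, g x = ∑ x, g x := by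
  obtain ⟨F, hFU, hF⟩ := exists_subset_card_eq hU
  have sum_subcube (a : ι → Bool) :
      2 * ∑ x ∈ subcube F a, (if f x = l then g x else 0) = 2 ^ r * g a := by
    have g_eq : ∀ x ∈ subcube F a, g x = g a := fun x hx =>
      hg fun j hj => mem_subcube.1 hx j fun hjF => hj (hFU hjF)
    calc 2 * ∑ x ∈ subcube F a, (if f x = l then g x else 0)
        = 2 * ∑ x ∈ subcube F a with f x = l, g a := by
          rw [← sum_filter, sum_congr rfl fun x hx => g_eq x (mem_of_mem_filter x hx)]
      _ = (2 * #{x ∈ subcube F a | f x = l} : ℕ) * g a := by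
          rw [sum_const, nsmul_eq_mul]; push_cast; ring
      _ = 2 ^ r * g a := by rw [hf.two_mul_card_filter_subcube hF]; norm_cast
  have averaged : 2 ^ r * (2 * ∑ x with f x = l, g x) = 2 ^ r * ∑ x, g x := by
    rw [sum_filter, mul_left_comm, ← hF, ← sum_sum_subcube, mul_sum, mul_sum, hF]
    exact sum_congr rfl fun a _ => sum_subcube a
  exact mul_left_cancel₀ (by positivity) averaged

end BalancedOnSubcubes

end Subcube

section Erasure

variable {ι : Type*} [Fintype ι] {m q : ι → ℝ}

/-- The probability of a sequence of answers, as a function of the input `x`, when each answer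
depends on one variable only: `q i` is the contribution of the answers about the variable `i`. -/
def likelihood (q : ι → Bool → ℝ) (x : ι → Bool) : ℝ :=
  ∏ i, q i (x i)

lemma likelihood_one (x : ι → Bool) : likelihood 1 x = 1 := by
  simp [likelihood]

lemma prod_mul_add_sub_le_exp_mul_prod (hm : ∀ i, 0 ≤ m i) (hmq : ∀ i, m i ≤ q i)
    (hq : ∀ i, q i ≤ 1) {θ : ℝ} (hθ0 : 0 ≤ θ) (hθ1 : θ ≤ 1) :
    ∏ i, (θ * m i + (q i - m i)) ≤ Real.exp (-((1 - θ) * ∑ i, m i)) * ∏ i, q i := by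
  rw [mul_sum, ← sum_neg_distrib, Real.exp_sum, ← prod_mul_distrib]
  refine prod_le_prod (fun i _ => ?_) fun i _ => ?_
  · exact add_nonneg (mul_nonneg hθ0 (hm i)) (sub_nonneg.2 (hmq i))
  · have hq0 : 0 ≤ q i := (hm i).trans (hmq i)
    have hθm : 0 ≤ (1 - θ) * m i := mul_nonneg (sub_nonneg.2 hθ1) (hm i)
    calc θ * m i + (q i - m i)
        = q i - (1 - θ) * m i := by ring
      _ ≤ q i - (1 - θ) * m i * q i := sub_le_sub_left (mul_le_of_le_one_right hθm (hq i)) _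
      _ = (1 - (1 - θ) * m i) * q i := by ring
      _ ≤ Real.exp (-((1 - θ) * m i)) * q i := by
          gcongr
          exact Real.one_sub_le_exp_neg _

variable [DecidableEq ι]

/-- The weight of erasing exactly the coordinates in `U`, when coordinate `i` of total weight `q i`
is erased with weight `m i`. -/
def erasureWeight (m q : ι → ℝ) (U : Finset ι) : ℝ :=
  (∏ i ∈ U, m i) * ∏ i ∈ Uᶜ, (q i - m i)

lemma erasureWeight_nonneg (hm : ∀ i, 0 ≤ m i) (hmq : ∀ i, m i ≤ q i) (U : Finset ι) :
    0 ≤ erasureWeight m q U :=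
  mul_nonneg (prod_nonneg fun i _ => hm i) (prod_nonneg fun i _ => sub_nonneg.2 (hmq i))

lemma sum_pow_card_mul_erasureWeight (m q : ι → ℝ) (θ : ℝ) :
    ∑ U, θ ^ #U * erasureWeight m q U = ∏ i, (θ * m i + (q i - m i)) := by
  simp only [Fintype.prod_add, erasureWeight, prod_mul_distrib, prod_const, mul_assoc]

lemma sum_erasureWeight (m q : ι → ℝ) : ∑ U, erasureWeight m q U = ∏ i, q i := by
  simpa using sum_pow_card_mul_erasureWeight m q 1

lemma sum_erasureWeight_card_le (hm : ∀ i, 0 ≤ m i) (hmq : ∀ i, m i ≤ q i)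
    (hq : ∀ i, q i ≤ 1) {θ : ℝ} (hθ0 : 0 < θ) (hθ1 : θ ≤ 1) (k : ℕ) :
    ∑ U with #U ≤ k, erasureWeight m q U ≤
      Real.exp (-((1 - θ) * ∑ i, m i)) / θ ^ k * ∏ i, q i := by
  rw [div_mul_eq_mul_div, le_div_iff₀' (by positivity)]
  have hw := erasureWeight_nonneg hm hmq
  calc θ ^ k * ∑ U with #U ≤ k, erasureWeight m q U
      = ∑ U with #U ≤ k, θ ^ k * erasureWeight m q U := mul_sum ..
    _ ≤ ∑ U with #U ≤ k, θ ^ #U * erasureWeight m q U :=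
        sum_le_sum fun U hU => mul_le_mul_of_nonneg_right
          (pow_le_pow_of_le_one hθ0.le hθ1 (mem_filter.1 hU).2) (hw U)
    _ ≤ ∑ U, θ ^ #U * erasureWeight m q U :=
        sum_le_univ_sum_of_nonneg fun U => mul_nonneg (by positivity) (hw U)
    _ ≤ Real.exp (-((1 - θ) * ∑ i, m i)) * ∏ i, q i := by
        rw [sum_pow_card_mul_erasureWeight]
        exact prod_mul_add_sub_le_exp_mul_prod hm hmq hq hθ0.le hθ1

lemma dependsOn_erasureWeight (m : ι → ℝ) (q : ι → Bool → ℝ) (U : Finset ι) :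
    DependsOn (fun x : ι → Bool => erasureWeight m (fun i => q i (x i)) U) (U : Set ι)ᶜ := by
  intro x y hxy
  simp only [erasureWeight]
  congr 1
  exact prod_congr rfl fun i hi => by rw [hxy i (by simpa using hi)]

lemma BalancedOnSubcubes.two_mul_sum_filter_likelihood_le {f : (ι → Bool) → Bool} {k : ℕ}
    (hf : BalancedOnSubcubes f (k + 1)) {q : ι → Bool → ℝ} (hm : ∀ i, 0 ≤ m i)
    (hmq : ∀ i b, m i ≤ q i b) (hq : ∀ i b, q i b ≤ 1) {θ : ℝ} (hθ0 : 0 < θ) (hθ1 : θ ≤ 1)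
    (l : Bool) :
    2 * ∑ x with f x = l, likelihood q x ≤
      (1 + Real.exp (-((1 - θ) * ∑ i, m i)) / θ ^ k) * ∑ x, likelihood q x := by
  set w : (ι → Bool) → Finset ι → ℝ := fun x => erasureWeight m fun i => q i (x i)
  have likelihood_eq (x : ι → Bool) : likelihood q x = ∑ U, w x U := (sum_erasureWeight _ _).symm
  have weight_le (U : Finset ι) :
      2 * ∑ x with f x = l, w x U ≤ ∑ x, w x U + if #U ≤ k then ∑ x, w x U else 0 := by
    split_ifs with hU
    · rw [← two_mul]
      gcongr
      · exact fun x _ _ => erasureWeight_nonneg hm (fun i => hmq i (x i)) U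
      · exact filter_subset _ _
    · rw [add_zero]
      exact (hf.two_mul_sum_filter_eq (by lia) (dependsOn_erasureWeight m q U) l).le
  calc 2 * ∑ x with f x = l, likelihood q x
      = ∑ U, 2 * ∑ x with f x = l, w x U := by
        simp only [likelihood_eq, ← mul_sum]
        rw [sum_comm]
    _ ≤ ∑ U, (∑ x, w x U + if #U ≤ k then ∑ x, w x U else 0) :=
        sum_le_sum fun U _ => weight_le U
    _ = ∑ x, likelihood q x + ∑ x, ∑ U with #U ≤ k, w x U := by
        simp only [likelihood_eq, sum_add_distrib, ← sum_filter]
        rw [sum_comm, sum_comm (s := univ.filter _)]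
    _ ≤ ∑ x, likelihood q x +
          ∑ x, Real.exp (-((1 - θ) * ∑ i, m i)) / θ ^ k * likelihood q x := by
        gcongr with x
        exact sum_erasureWeight_card_le hm (fun i => hmq i _) (fun i => hq i _) hθ0 hθ1 k
    _ = (1 + Real.exp (-((1 - θ) * ∑ i, m i)) / θ ^ k) * ∑ x, likelihood q x := by
        rw [← mul_sum, one_add_mul]

end Erasure

section ReadLikelihood

variable {ι : Type*} {ε : ℝ}

lemma card_mul_rpow_div_card_le_sum_pow [Fintype ι] (hε0 : 0 < ε) (hε1 : ε ≤ 1) {k : ι → ℕ} {D : ℕ}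
    (hk : ∑ i, k i ≤ D) :
    Fintype.card ι * ε ^ (D / Fintype.card ι : ℝ) ≤ ∑ i, ε ^ k i := by
  obtain hι | hι := isEmpty_or_nonempty ι
  · simp
  have hn : (0 : ℝ) < Fintype.card ι := by exact_mod_cast Fintype.card_pos
  have geom_mean_le : (ε ^ ∑ i, k i) ^ (Fintype.card ι : ℝ)⁻¹ ≤
      (∑ i, ε ^ k i) / Fintype.card ι := by
    simpa [prod_pow_eq_pow_sum, hn] using Real.geom_mean_le_arith_mean univ (fun _ => 1)
      (fun i => ε ^ k i) (fun _ _ => zero_le_one) (by simpa using hn) (fun i _ => by positivity)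
  rw [← le_div_iff₀' hn]
  refine le_trans ?_ geom_mean_le
  rw [← Real.rpow_natCast, ← Real.rpow_mul hε0.le, ← div_eq_mul_inv]
  exact Real.rpow_le_rpow_of_exponent_ge hε0 hε1 (by gcongr)

/-- The probability that an `ε`-noisy read of a variable with value `b` returns `c`. -/
def readProb (ε : ℝ) (c b : Bool) : ℝ :=
  if b = c then 1 - ε else ε

/-- `q i b` is a possible likelihood, given the value `b` of the variable `i`, of the answers to
`k i` many `ε`-noisy reads of `i`; only the resulting bounds on `q` are recorded. -/
def IsReadLikelihood (ε : ℝ) (k : ι → ℕ) (q : ι → Bool → ℝ) : Prop :=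
  ∀ i b, q i b ∈ Set.Icc (ε ^ k i) 1

lemma readProb_false_add_readProb_true (ε : ℝ) (b : Bool) :
    readProb ε false b + readProb ε true b = 1 := by
  cases b <;> simp [readProb]

lemma readProb_mem_Icc (hε0 : 0 ≤ ε) (hε1 : ε ≤ 1 / 2) (c b : Bool) :
    readProb ε c b ∈ Set.Icc ε 1 := by
  unfold readProb
  split_ifs <;> constructor <;> linarith

lemma IsReadLikelihood.nonneg {k : ι → ℕ} {q : ι → Bool → ℝ} (hq : IsReadLikelihood ε k q)
    (hε0 : 0 ≤ ε) (i : ι) (b : Bool) : 0 ≤ q i b :=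
  (pow_nonneg hε0 _).trans (hq i b).1

lemma isReadLikelihood_one (ε : ℝ) : IsReadLikelihood ε (0 : ι → ℕ) 1 := by
  intro i
  simp

variable [DecidableEq ι]

lemma IsReadLikelihood.mulSingle_readProb_mul {k : ι → ℕ} {q : ι → Bool → ℝ}
    (hq : IsReadLikelihood ε k q) (hε0 : 0 ≤ ε) (hε1 : ε ≤ 1 / 2) (i : ι) (c : Bool) :
    IsReadLikelihood ε (Pi.single i 1 + k) (Pi.mulSingle i (readProb ε c) * q) := by
  intro j b
  obtain rfl | hj := eq_or_ne j i
  · obtain ⟨le_read, read_le⟩ := readProb_mem_Icc hε0 hε1 c b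
    simp only [Pi.add_apply, Pi.mul_apply, Pi.single_eq_same, Pi.mulSingle_eq_same, pow_add,
      pow_one]
    exact ⟨mul_le_mul le_read (hq j b).1 (pow_nonneg hε0 _) (hε0.trans le_read),
      mul_le_one₀ read_le (hq.nonneg hε0 j b) (hq j b).2⟩
  · simpa [hj] using hq j b

variable [Fintype ι]

lemma likelihood_mulSingle_mul (i : ι) (p : Bool → ℝ) (q : ι → Bool → ℝ) (x : ι → Bool) :
    likelihood (Pi.mulSingle i p * q) x = p (x i) * likelihood q x := by
  have mulSingle_apply (j : ι) :
      (Pi.mulSingle i p : ι → Bool → ℝ) j (x j) = if j = i then p (x i) else 1 := by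
    obtain rfl | hj := eq_or_ne j i <;> simp [*]
  simp only [likelihood, Pi.mul_apply, prod_mul_distrib, mulSingle_apply, prod_ite_eq', mem_univ,
    if_true]

end ReadLikelihood

namespace NoisyTree

variable {n : ℕ} {ε : ℝ}

/-- The probability that the `ε`-noisy computation of `T` on a uniformly random input `x` outputs
`f x`. -/
noncomputable def successProb (ε : ℝ) (T : NoisyTree n Bool) (f : (Fin n → Bool) → Bool) : ℝ :=
  (1 / 2 ^ n) * ∑ x, T.leafDist ε x (f x)

lemma leafDist_node {L : Type} [DecidableEq L] (ε : ℝ) (i : Fin n) (t₀ t₁ : NoisyTree n L)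
    (x : Fin n → Bool) (l : L) :
    leafDist ε (.node i t₀ t₁) x l =
      readProb ε false (x i) * t₀.leafDist ε x l + readProb ε true (x i) * t₁.leafDist ε x l := by
  cases h : x i <;> simp [leafDist, readProb, h]

lemma two_mul_sum_likelihood_mul_leafDist_le (hε0 : 0 ≤ ε) (hε1 : ε ≤ 1 / 2)
    {f : (Fin n → Bool) → Bool} {D : ℕ} {C : ℝ}
    (hleaf : ∀ {k : Fin n → ℕ} {q : Fin n → Bool → ℝ}, IsReadLikelihood ε k q → ∑ i, k i ≤ D →
      ∀ l, 2 * ∑ x with f x = l, likelihood q x ≤ C * ∑ x, likelihood q x)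
    (T : NoisyTree n Bool) {k : Fin n → ℕ} {q : Fin n → Bool → ℝ}
    (hq : IsReadLikelihood ε k q) (hD : ∑ i, k i + T.depth ≤ D) :
    2 * ∑ x, likelihood q x * T.leafDist ε x (f x) ≤ C * ∑ x, likelihood q x := by
  induction T generalizing k q with
  | leaf l =>
    simpa only [leafDist, mul_ite, mul_one, mul_zero, ← sum_filter] using
      hleaf hq (Nat.le_of_add_right_le hD) l
  | node i t₀ t₁ ih₀ ih₁ =>
    have reads_succ : ∑ j, (Pi.single i 1 + k : Fin n → ℕ) j = ∑ j, k j + 1 := by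
      simp [sum_add_distrib, add_comm]
    simp only [depth] at hD
    have bound₀ := ih₀ (hq.mulSingle_readProb_mul hε0 hε1 i false) (by lia)
    have bound₁ := ih₁ (hq.mulSingle_readProb_mul hε0 hε1 i true) (by lia)
    simp only [likelihood_mulSingle_mul] at bound₀ bound₁
    have success_split : ∑ x, likelihood q x * leafDist ε (.node i t₀ t₁) x (f x) =
        ∑ x, readProb ε false (x i) * likelihood q x * t₀.leafDist ε x (f x) +
          ∑ x, readProb ε true (x i) * likelihood q x * t₁.leafDist ε x (f x) := by
      rw [← sum_add_distrib]
      exact sum_congr rfl fun x _ => by rw [leafDist_node]; ring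
    have mass_split : ∑ x, likelihood q x =
        ∑ x, readProb ε false (x i) * likelihood q x +
          ∑ x, readProb ε true (x i) * likelihood q x := by
      simp only [← sum_add_distrib, ← add_mul, readProb_false_add_readProb_true, one_mul]
    rw [success_split, mass_split, mul_add, mul_add]
    exact add_le_add bound₀ bound₁

theorem successProb_le (hε0 : 0 < ε) (hε1 : ε ≤ 1 / 2) {f : (Fin n → Bool) → Bool} {k : ℕ}
    (hf : BalancedOnSubcubes f (k + 1)) {θ : ℝ} (hθ0 : 0 < θ) (hθ1 : θ ≤ 1)
    (T : NoisyTree n Bool) :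
    T.successProb ε f ≤
      (1 + Real.exp (-((1 - θ) * (n * ε ^ (T.depth / n : ℝ)))) / θ ^ k) / 2 := by
  set C : ℝ := 1 + Real.exp (-((1 - θ) * (n * ε ^ (T.depth / n : ℝ)))) / θ ^ k with hC
  have leaf_bound {reads : Fin n → ℕ} {q : Fin n → Bool → ℝ} (hq : IsReadLikelihood ε reads q)
      (hreads : ∑ i, reads i ≤ T.depth) (l : Bool) :
      2 * ∑ x with f x = l, likelihood q x ≤ C * ∑ x, likelihood q x := by
    have erasures_ge : n * ε ^ (T.depth / n : ℝ) ≤ ∑ i, ε ^ reads i := by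
      simpa using card_mul_rpow_div_card_le_sum_pow hε0 (by linarith) hreads
    refine (hf.two_mul_sum_filter_likelihood_le (fun i => pow_nonneg hε0.le (reads i))
      (fun i b => (hq i b).1) (fun i b => (hq i b).2) hθ0 hθ1 l).trans ?_
    rw [hC]
    gcongr
    exact sum_nonneg fun x _ => prod_nonneg fun i _ => hq.nonneg hε0.le i (x i)
  have root_bound := two_mul_sum_likelihood_mul_leafDist_le hε0.le hε1 leaf_bound T
    (isReadLikelihood_one ε) (by simp)
  have card_cube : ∑ _x : Fin n → Bool, (1 : ℝ) = 2 ^ n := by simp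
  simp only [likelihood_one, one_mul, card_cube] at root_bound
  rw [successProb, one_div_mul_eq_div, div_le_div_iff₀ (by positivity) two_pos]
  linarith

end NoisyTree

lemma inv_le_rpow_of_le_logb_div_logb {ε x y : ℝ} (hε0 : 0 < ε) (hε1 : ε < 1) (hy : 0 < y)
    (hx : x ≤ Real.logb 2 y / Real.logb 2 (1 / ε)) : y⁻¹ ≤ ε ^ x := by
  have rpow_le : (1 / ε) ^ x ≤ y := by
    rwa [Real.logb, Real.logb, div_div_div_cancel_right₀ (Real.log_pos one_lt_two).ne',
      Real.log_div_log, Real.le_logb_iff_rpow_le (one_lt_one_div hε0 hε1) hy] at hx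
  rw [one_div, Real.inv_rpow hε0.le] at rpow_le
  exact inv_le_of_inv_le₀ (by positivity) rpow_le

lemma exp_neg_natCast_succ_lt (k : ℕ) :
    Real.exp (-(k + 1 : ℝ)) < (1 / 2) ^ (k + 1) := by
  have exp_neg_one_lt : Real.exp (-1) < 1 / 2 := by
    rw [Real.exp_neg, ← one_div]
    gcongr
    linarith [Real.add_one_lt_exp one_ne_zero]
  calc Real.exp (-(k + 1 : ℝ)) = Real.exp (-1) ^ (k + 1) := by
        rw [← Real.exp_nat_mul]; push_cast; ring_nf
    _ < (1 / 2) ^ (k + 1) := by gcongr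

theorem noisy_tree_resilient_depth_lb_general {n r : ℕ} {ε : ℝ} (hε0 : 0 < ε) (hε1 : ε ≤ 1 / 2)
    (hrn : r ≤ n) {f : (Fin n → Bool) → Bool} (hf : BalancedOnSubcubes f r)
    (T : NoisyTree n Bool) (hsucc : 3 / 4 ≤ T.successProb ε f) :
    n * Real.logb 2 (n / (2 * r)) / Real.logb 2 (1 / ε) < T.depth := by
  by_contra! hdepth
  have hr := hf.pos
  have hn : (0 : ℝ) < n := by exact_mod_cast hr.trans_le hrn
  obtain ⟨k, rfl⟩ : ∃ k, r = k + 1 := Nat.exists_eq_add_one.2 hr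
  have erasures_ge : (k + 1 : ℝ) ≤ (1 - 1 / 2) * (n * ε ^ (T.depth / n : ℝ)) := by
    have := inv_le_rpow_of_le_logb_div_logb
      (x := T.depth / n) (y := n / (2 * (k + 1 : ℕ))) hε0 (by linarith)
      (by positivity) (by rwa [div_le_iff₀' hn, ← mul_div_assoc])
    rw [inv_div, div_le_iff₀' hn] at this
    push_cast at this
    linarith
  have few_erasures_lt :
      Real.exp (-((1 - 1 / 2) * (n * ε ^ (T.depth / n : ℝ)))) / (1 / 2) ^ k < 1 / 2 := by
    rw [div_lt_iff₀ (by positivity), ← pow_succ']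
    exact (Real.exp_le_exp.2 (neg_le_neg erasures_ge)).trans_lt (exp_neg_natCast_succ_lt k)
  linarith [T.successProb_le hε0 hε1 hf (θ := 1 / 2) (by norm_num) (by norm_num)]

lemma div_two_mul_logb_div_le {x r s : ℝ} (hr : 0 < r) (hs : 64 ≤ s) (hsr : s * r ≤ x) :
    x / 2 * Real.logb 2 (s / 64) ≤ x * Real.logb 2 (x / (2 * r)) := by
  have hx : 0 < x := lt_of_lt_of_le (by positivity) hsr
  have logb_nonneg : 0 ≤ Real.logb 2 (s / 64) :=
    Real.logb_nonneg one_lt_two (by linarith)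
  have ratio_le : s / 64 ≤ x / (2 * r) := by
    rw [le_div_iff₀ (by positivity)]
    linarith [mul_pos (by positivity : 0 < s) hr]
  calc x / 2 * Real.logb 2 (s / 64) ≤ x * Real.logb 2 (s / 64) := by gcongr; linarith
    _ ≤ x * Real.logb 2 (x / (2 * r)) := by gcongr; exact one_lt_two

/-- If `s ≥ 64` divides `n` and `f : {0,1}^n → {0,1}` is `t`-resilient for
`t = n(1 - 1/s)`, i.e. `f` takes the value `1` on exactly half the points of every
subcube of dimension `n - t = n/s`, then every `ε`-noisy boolean decision tree `T`
computing `f` with success probability at least `3/4` (over a uniform input and the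
internal noise of `T`) has depth strictly greater than
`(n/2) · log₂(s/64) / log₂(1/ε)`. -/
theorem noisy_tree_resilient_depth_lb {n s : ℕ} (ε : ℝ)
    (hε0 : 0 < ε) (hε1 : ε < 1 / 2) (hs : 64 ≤ s) (hdvd : s ∣ n)
    (f : (Fin n → Bool) → Bool)
    (hres : ∀ F : Finset (Fin n), F.card = n / s → ∀ a : Fin n → Bool,
      2 * (Finset.univ.filter fun x : Fin n → Bool =>
          (∀ j ∉ F, x j = a j) ∧ f x = true).card = 2 ^ (n / s))
    (T : NoisyTree n Bool)
    (hsucc : (3 / 4 : ℝ) ≤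
      (1 / 2 ^ n) * ∑ x : Fin n → Bool, T.leafDist ε x (f x)) :
    ((n : ℝ) / 2) * Real.logb 2 ((s : ℝ) / 64) / Real.logb 2 (1 / ε) <
      (T.depth : ℝ) := by
  have hf : BalancedOnSubcubes f (n / s) := fun F hF a => by
    rw [subcube, filter_filter]
    convert hres F hF a
  have hlog : 0 ≤ Real.logb 2 (1 / ε) :=
    Real.logb_nonneg one_lt_two (one_le_one_div hε0 (by linarith))
  have hr : (0 : ℝ) < (n / s : ℕ) := by exact_mod_cast hf.pos
  have hsr : (s : ℝ) * (n / s : ℕ) ≤ n := by exact_mod_cast Nat.mul_div_le n s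
  exact (div_le_div_of_nonneg_right
    (div_two_mul_logb_div_le hr (by exact_mod_cast hs) hsr) hlog).trans_lt
    (noisy_tree_resilient_depth_lb_general hε0 hε1.le (Nat.div_le_self n s) hf T hsucc)
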